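/- Let Ω be a Polish space. Every sequence (μ_n) of finite signed Borel measures on Ω that is weakly Cauchy (i.e., (∫ f dμ_n) converges for every bounded continuous f) converges weakly to a finite signed Borel measure μ, i.e., the space of bounded measures on a Polish space is weakly sequentially complete with respect to the duality with C_b(Ω). -/

import Mathlib

open Filter Topology MeasureTheory

/-- Integral of a bounded continuous function against a finite signed measure, via the
Jordan decomposition. -/
noncomputable def signedIntegral {Ω : Type*} [TopologicalSpace Ω] [MeasurableSpace Ω]
    (μ : MeasureTheory.SignedMeasure Ω) (f : BoundedContinuousFunction Ω ℝ) : ℝ :=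
  (∫ x, f x ∂μ.toJordanDecomposition.posPart) - ∫ x, f x ∂μ.toJordanDecomposition.negPart

open scoped BoundedContinuousFunction NNReal ENNReal UniformConvergence

lemma BoundedContinuousFunction.integral_le_measureReal {Ω : Type*} [TopologicalSpace Ω]
    [MeasurableSpace Ω] [OpensMeasurableSpace Ω] (ρ : Measure Ω) [IsFiniteMeasure ρ]
    {S : Set Ω} (hS : MeasurableSet S) {g : Ω →ᵇ ℝ} (hg : ∀ x, g x ≤ 1)
    (hgS : ∀ x ∉ S, g x ≤ 0) : ∫ x, g x ∂ρ ≤ ρ.real S := by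
  rw [← integral_indicator_one hS]
  exact integral_mono (g.integrable ρ) ((integrable_const 1).indicator hS)
    (Set.le_indicator (fun x _ => hg x) hgS)

lemma BoundedContinuousFunction.measureReal_le_integral {Ω : Type*} [TopologicalSpace Ω]
    [MeasurableSpace Ω] [OpensMeasurableSpace Ω] (ρ : Measure Ω) [IsFiniteMeasure ρ]
    {S : Set Ω} (hS : MeasurableSet S) {g : Ω →ᵇ ℝ} (hg : ∀ x, 0 ≤ g x)
    (hgS : ∀ x ∈ S, 1 ≤ g x) : ρ.real S ≤ ∫ x, g x ∂ρ := by
  rw [← integral_indicator_one hS]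
  exact integral_mono ((integrable_const 1).indicator hS) (g.integrable ρ)
    (Set.indicator_le' hgS fun x _ => hg x)

/-- The positive part of a signed measure on an open set is controlled by the integrals of the
continuous functions with values in `[0, 1]` which vanish outside of this set. -/
lemma measureReal_le_of_forall_integral_sub_le {Ω : Type*} [TopologicalSpace Ω]
    [TopologicalSpace.PseudoMetrizableSpace Ω] [MeasurableSpace Ω] [BorelSpace Ω]
    {p q : Measure Ω} [IsFiniteMeasure p] [IsFiniteMeasure q] (hpq : p ⟂ₘ q)
    {V : Set Ω} (hV : IsOpen V) {c : ℝ}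
    (h : ∀ g : Ω →ᵇ ℝ, (∀ x, g x ∈ Set.Icc 0 1) → (∀ x ∉ V, g x = 0) →
      ∫ x, g x ∂p - ∫ x, g x ∂q ≤ c) :
    p.real V ≤ c := by
  let _ := TopologicalSpace.pseudoMetrizableSpacePseudoMetric Ω
  obtain ⟨S, hS, hpS, hqS⟩ := hpq
  have hpV : p (V ∩ Sᶜ) = p V := by
    refine measure_inter_conull ?_
    simpa using hpS
  refine le_of_forall_pos_le_add fun ε hε => ?_
  have hε2 : ENNReal.ofReal (ε / 2) ≠ 0 := by simpa using hε
  obtain ⟨K, hKV, hK, hpK⟩ := (hV.measurableSet.inter hS.compl).exists_isClosed_lt_add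
    (measure_ne_top p _) hε2
  have hqK : q K = 0 := measure_mono_null (hKV.trans Set.inter_subset_right) hqS
  obtain ⟨W, hKW, hW, hqW⟩ := K.exists_isOpen_lt_add (measure_ne_top q K) hε2
  rw [hqK, zero_add] at hqW
  rw [hpV] at hpK
  have hKVW : K ⊆ V ∩ W := Set.subset_inter (hKV.trans Set.inter_subset_left) hKW
  obtain ⟨g₀, hg0, hg1, hg⟩ := exists_continuous_zero_one_of_isClosed
    (hV.inter hW).isClosed_compl hK (Set.disjoint_compl_left_iff_subset.2 hKVW)
  let g : Ω →ᵇ ℝ := BoundedContinuousFunction.ofNormedAddCommGroup g₀ g₀.continuous 1 fun x => by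
    rw [Real.norm_eq_abs, abs_of_nonneg (hg x).1]; exact (hg x).2
  have hgc := h g hg fun x hx => hg0 fun hx' => hx hx'.1
  have h1 : p.real K ≤ ∫ x, g x ∂p :=
    BoundedContinuousFunction.measureReal_le_integral p hK.measurableSet
      (fun x => (hg x).1) fun x hx => (hg1 hx).ge
  have h2 : ∫ x, g x ∂q ≤ q.real W :=
    BoundedContinuousFunction.integral_le_measureReal q hW.measurableSet (fun x => (hg x).2)
      fun x hx => (hg0 fun hx' => hx hx'.2).le
  have h3 : p.real V ≤ p.real K + ε / 2 := by
    have := ENNReal.toReal_mono (by finiteness) hpK.le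
    rwa [ENNReal.toReal_add (by finiteness) (by finiteness),
      ENNReal.toReal_ofReal (by positivity)] at this
  have h4 : q.real W ≤ ε / 2 := by
    have := ENNReal.toReal_mono (by finiteness) hqW.le
    rwa [ENNReal.toReal_ofReal (by positivity)] at this
  linarith

/-- A weakly Cauchy sequence of differences of finite measures is uniformly Cauchy on the functions
bounded by `1` which vanish on a large enough member of a given exhaustion. The proof is a
Baire category argument in the unit ball of bounded continuous functions, endowed with the
topology of uniform convergence on the members of the exhaustion. -/
lemma exists_forall_abs_sub_le_of_cauchySeq {Ω : Type*} [TopologicalSpace Ω]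
    [MeasurableSpace Ω] [OpensMeasurableSpace Ω] {p q : ℕ → Measure Ω}
    [∀ n, IsFiniteMeasure (p n)] [∀ n, IsFiniteMeasure (q n)]
    (hcauchy : ∀ f : Ω →ᵇ ℝ, CauchySeq fun n => ∫ x, f x ∂p n - ∫ x, f x ∂q n)
    {U : ℕ → Set Ω} (hUmono : Monotone U) (hU : ∀ x, ∃ k, U k ∈ 𝓝 x) {ε : ℝ} (hε : 0 < ε) :
    ∃ k N, ∀ g : Ω →ᵇ ℝ, (∀ x, |g x| ≤ 1) → (∀ x ∈ U k, g x = 0) → ∀ n ≥ N, ∀ m ≥ N,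
      |(∫ x, g x ∂p n - ∫ x, g x ∂q n) - (∫ x, g x ∂p m - ∫ x, g x ∂q m)| ≤ ε := by
  let 𝔖 := Set.range U
  have hcov : ⋃₀ 𝔖 = Set.univ := Set.eq_univ_of_forall fun x =>
    let ⟨k, hk⟩ := hU x; ⟨U k, ⟨k, rfl⟩, mem_of_mem_nhds hk⟩
  have hcoh : IsCoherentWith 𝔖 := .of_nhds fun x => let ⟨k, hk⟩ := hU x; ⟨U k, ⟨k, rfl⟩, hk⟩
  have heval (x : Ω) : Continuous fun f : Ω →ᵤ[𝔖] ℝ => UniformOnFun.toFun 𝔖 f x :=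
    (UniformOnFun.uniformContinuous_eval hcov x).continuous
  let B : Set (Ω →ᵤ[𝔖] ℝ) :=
    {f | Continuous (UniformOnFun.toFun 𝔖 f)} ∩ {f | ∀ x, |UniformOnFun.toFun 𝔖 f x| ≤ 1}
  have hB : IsClosed B := by
    refine (UniformOnFun.isClosed_setOfPred_continuous hcoh).inter ?_
    simp only [Set.ofPred_forall]
    exact isClosed_iInter fun x => isClosed_le (heval x).abs continuous_const
  have : IsCountablyGenerated (uniformity (Ω →ᵤ[𝔖] ℝ)) :=
    UniformOnFun.isCountablyGenerated_uniformity 𝔖 (t := U) (fun n => ⟨n, rfl⟩) hUmono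
      (by rintro _ ⟨k, rfl⟩; exact ⟨k, subset_rfl⟩)
  have : CompleteSpace B := hB.completeSpace_coe
  have : IsCountablyGenerated (uniformity B) := by
    rw [uniformity_subtype]; infer_instance
  have : Nonempty B := ⟨⟨UniformOnFun.ofFun 𝔖 0, by
    constructor
    · exact continuous_const
    · intro x; simp⟩⟩
  let toBCF (f : B) : Ω →ᵇ ℝ :=
    BoundedContinuousFunction.ofNormedAddCommGroup (UniformOnFun.toFun 𝔖 f.1) f.2.1 1 f.2.2
  have hint (ρ : Measure Ω) [IsFiniteMeasure ρ] : Continuous fun f : B => ∫ x, toBCF f x ∂ρ :=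
    continuous_of_dominated (bound := fun _ => 1)
      (fun f => (toBCF f).continuous.measurable.aestronglyMeasurable)
      (fun f => ae_of_all _ f.2.2) (integrable_const 1)
      (ae_of_all _ fun x => (heval x).comp continuous_subtype_val)
  let I (n : ℕ) (f : Ω →ᵇ ℝ) : ℝ := ∫ x, f x ∂p n - ∫ x, f x ∂q n
  have hI_sub (n : ℕ) (f g : Ω →ᵇ ℝ) : I n (f - g) = I n f - I n g := by
    simp only [I, BoundedContinuousFunction.coe_sub, Pi.sub_apply]
    rw [integral_sub (f.integrable _) (g.integrable _),
      integral_sub (f.integrable _) (g.integrable _)]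
    ring
  have hI (n : ℕ) : Continuous fun f : B => I n (toBCF f) := (hint (p n)).sub (hint (q n))
  let A (N : ℕ) : Set B :=
    {f | ∀ n ≥ N, ∀ m ≥ N, |I n (toBCF f) - I m (toBCF f)| ≤ ε / 2}
  have hA (N : ℕ) : IsClosed (A N) := by
    simp only [A, Set.ofPred_forall]
    exact isClosed_iInter fun n => isClosed_iInter fun _ => isClosed_iInter fun m =>
      isClosed_iInter fun _ => isClosed_le ((hI n).sub (hI m)).abs continuous_const
  have hA_univ : ⋃ N, A N = Set.univ := by
    refine Set.eq_univ_of_forall fun f => Set.mem_iUnion.2 ?_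
    obtain ⟨N, hN⟩ := Metric.cauchySeq_iff.1 (hcauchy (toBCF f)) (ε / 2) (half_pos hε)
    exact ⟨N, fun n hn m hm => (hN n hn m hm).le⟩
  obtain ⟨N, f₀, hf₀⟩ := nonempty_interior_of_iUnion_of_closed hA hA_univ
  rw [mem_interior_iff_mem_nhds, mem_nhds_subtype_iff_nhdsWithin,
    mem_nhdsWithin_iff_exists_mem_nhds_inter] at hf₀
  obtain ⟨T, hT, hTA⟩ := hf₀
  obtain ⟨⟨S, t⟩, ⟨⟨k, rfl⟩, ht⟩, hST⟩ := (UniformOnFun.hasBasis_nhds Ω ℝ 𝔖 f₀.1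
    (Set.range_nonempty U) (directedOn_range.2 hUmono.directed_le)).mem_iff.1 hT
  have key (f : Ω →ᵇ ℝ) (hf : ∀ x, |f x| ≤ 1) (hfU : ∀ x ∈ U k, f x = toBCF f₀ x) :
      ∀ n ≥ N, ∀ m ≥ N, |I n f - I m f| ≤ ε / 2 := by
    have hfB : UniformOnFun.ofFun 𝔖 f ∈ B := ⟨f.continuous, hf⟩
    have hfT : UniformOnFun.ofFun 𝔖 f ∈ T := hST fun x hx => by
      have : UniformOnFun.toFun 𝔖 (UniformOnFun.ofFun 𝔖 f) x = UniformOnFun.toFun 𝔖 f₀.1 x :=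
        hfU x hx
      rw [this]
      exact refl_mem_uniformity ht
    obtain ⟨f₃, hf₃, hf₃f⟩ := hTA ⟨hfT, hfB⟩
    have : toBCF f₃ = f := by
      ext x
      exact congrFun hf₃f x
    exact this ▸ hf₃
  refine ⟨k, N, fun g hg hgU n hn m hm => ?_⟩
  let f₂ : Ω →ᵇ ℝ := (1 - |g|) * toBCF f₀
  let f₁ : Ω →ᵇ ℝ := f₂ + g
  have hf₂ (x : Ω) : |f₂ x| ≤ 1 - |g x| := by
    have h1 : f₂ x = (1 - |g x|) * toBCF f₀ x := rfl
    rw [h1, abs_mul, abs_of_nonneg (sub_nonneg.2 (hg x))]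
    exact mul_le_of_le_one_right (sub_nonneg.2 (hg x)) (f₀.2.2 x)
  have hf₂U (x : Ω) (hx : x ∈ U k) : f₂ x = toBCF f₀ x := by
    have h1 : f₂ x = (1 - |g x|) * toBCF f₀ x := rfl
    simp [h1, hgU x hx]
  have e₁ := key f₁ (fun x => (abs_add_le (f₂ x) (g x)).trans (by linarith [hf₂ x]))
    (fun x hx => by
      have h1 : f₁ x = f₂ x + g x := rfl
      rw [h1, hf₂U x hx, hgU x hx, add_zero]) n hn m hm
  have e₂ := key f₂ (fun x => (hf₂ x).trans (by linarith [abs_nonneg (g x)])) hf₂U n hn m hm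
  have hg_eq : g = f₁ - f₂ := by simp [f₁]
  change |I n g - I m g| ≤ ε
  rw [hg_eq, hI_sub, hI_sub]
  rw [abs_le] at *
  constructor <;> linarith

/-- The positive parts of a weakly Cauchy sequence of signed measures are uniformly small outside
of a large enough member of a closed exhaustion. -/
lemma exists_forall_measureReal_compl_le {Ω : Type*} [TopologicalSpace Ω]
    [TopologicalSpace.PseudoMetrizableSpace Ω] [MeasurableSpace Ω] [BorelSpace Ω]
    {p q : ℕ → Measure Ω} [∀ n, IsFiniteMeasure (p n)] [∀ n, IsFiniteMeasure (q n)]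
    (hpq : ∀ n, p n ⟂ₘ q n)
    (hcauchy : ∀ f : Ω →ᵇ ℝ, CauchySeq fun n => ∫ x, f x ∂p n - ∫ x, f x ∂q n)
    {U : ℕ → Set Ω} (hUmono : Monotone U) (hUclosed : ∀ k, IsClosed (U k))
    (hU : ∀ x, ∃ k, U k ∈ 𝓝 x) {ε : ℝ} (hε : 0 < ε) :
    ∃ k, ∀ n, (p n).real (U k)ᶜ ≤ ε := by
  obtain ⟨k₀, N, hN⟩ := exists_forall_abs_sub_le_of_cauchySeq hcauchy hUmono hU (half_pos hε)
  have hlim (n : ℕ) : ∀ᶠ k in atTop, (p n).real (U k)ᶜ ≤ ε / 2 := by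
    have h := tendsto_measure_iInter_atTop (μ := p n) (s := fun k => (U k)ᶜ)
      (fun k => (hUclosed k).measurableSet.compl.nullMeasurableSet)
      (fun i j hij => Set.compl_subset_compl.2 (hUmono hij)) ⟨0, measure_ne_top _ _⟩
    have hempty : ⋂ k, (U k)ᶜ = ∅ := by
      rw [← Set.compl_iUnion, Set.compl_empty_iff]
      exact Set.eq_univ_of_forall fun x =>
        let ⟨k, hk⟩ := hU x; Set.mem_iUnion.2 ⟨k, mem_of_mem_nhds hk⟩
    rw [hempty, measure_empty] at h
    have h' := (ENNReal.tendsto_toReal ENNReal.zero_ne_top).comp h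
    exact h'.eventually_le_const (by simpa using hε)
  obtain ⟨k, hk, hk₀⟩ := (((Set.finite_Iic N).eventually_all.2 fun n _ => hlim n).and
    (eventually_ge_atTop k₀)).exists
  refine ⟨k, fun n => ?_⟩
  rcases le_total n N with hn | hn
  · exact (hk n hn).trans (by linarith)
  refine measureReal_le_of_forall_integral_sub_le (hpq n) (hUclosed k).isOpen_compl
    fun g hg hgU => ?_
  have h1 := (abs_le.1 (hN g (fun x => abs_le.2 ⟨by linarith [(hg x).1], (hg x).2⟩)
    (fun x hx => hgU x fun hx' => hx' (hUmono hk₀ hx)) n hn N le_rfl)).2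
  have h2 : ∫ x, g x ∂p N ≤ (p N).real (U k)ᶜ :=
    BoundedContinuousFunction.integral_le_measureReal (p N) (hUclosed k).measurableSet.compl
      (fun x => (hg x).2)
      fun x hx => (hgU x hx).le
  have h3 : 0 ≤ ∫ x, g x ∂q N := integral_nonneg fun x => (hg x).1
  linarith [hk N (Set.mem_Iic.2 le_rfl)]

/-- The positive parts of a weakly Cauchy sequence of signed measures on a Polish space are
uniformly tight. -/
lemma exists_isCompact_forall_measure_compl_le {Ω : Type*} [TopologicalSpace Ω] [PolishSpace Ω]
    [MeasurableSpace Ω] [BorelSpace Ω]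
    {p q : ℕ → Measure Ω} [∀ n, IsFiniteMeasure (p n)] [∀ n, IsFiniteMeasure (q n)]
    (hpq : ∀ n, p n ⟂ₘ q n)
    (hcauchy : ∀ f : Ω →ᵇ ℝ, CauchySeq fun n => ∫ x, f x ∂p n - ∫ x, f x ∂q n)
    {ε : ℝ≥0} (hε : 0 < ε) :
    ∃ K, IsCompact K ∧ ∀ n, p n Kᶜ ≤ ε := by
  let _ := TopologicalSpace.upgradeIsCompletelyMetrizable Ω
  rcases isEmpty_or_nonempty Ω with hΩ | hΩ
  · exact ⟨∅, isCompact_empty, fun n => by simp [Measure.eq_zero_of_isEmpty]⟩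
  let D := TopologicalSpace.denseSeq Ω
  let r (m : ℕ) : ℝ := 1 / (m + 1)
  have hr (m : ℕ) : 0 < r m := by positivity
  let U (m k : ℕ) : Set Ω := ⋃ i ∈ Set.Iic k, Metric.closedBall (D i) (r m)
  have hUclosed (m k : ℕ) : IsClosed (U m k) :=
    (Set.finite_Iic k).isClosed_biUnion fun _ _ => Metric.isClosed_closedBall
  have hUmono (m : ℕ) : Monotone (U m) := fun i j hij =>
    Set.biUnion_subset_biUnion_left (Set.Iic_subset_Iic.2 hij)
  have hU (m : ℕ) (x : Ω) : ∃ k, U m k ∈ 𝓝 x := by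
    obtain ⟨k, hk⟩ := (TopologicalSpace.denseRange_denseSeq Ω).exists_dist_lt x (hr m)
    exact ⟨k, mem_of_superset (Metric.isOpen_ball.mem_nhds hk)
      (Metric.ball_subset_closedBall.trans
        (Set.subset_biUnion_of_mem (u := fun i => Metric.closedBall (D i) (r m))
          (Set.mem_Iic.2 le_rfl)))⟩
  obtain ⟨δ, hδ, hδε⟩ := NNReal.exists_pos_sum_of_countable hε.ne' ℕ
  obtain ⟨c, hδc, hcε⟩ := hδε
  choose k hk using fun m => exists_forall_measureReal_compl_le hpq hcauchy (hUmono m)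
    (hUclosed m) (hU m) (NNReal.coe_pos.2 (hδ m))
  refine ⟨⋂ m, U m (k m), ?_, fun n => ?_⟩
  · refine TotallyBounded.isCompact_of_isClosed (Metric.totallyBounded_iff.2 fun η hη => ?_)
      (isClosed_iInter fun m => hUclosed m (k m))
    obtain ⟨m, hm⟩ := exists_nat_one_div_lt hη
    refine ⟨D '' Set.Iic (k m), (Set.finite_Iic _).image _, (Set.iInter_subset _ m).trans ?_⟩
    rw [Set.biUnion_image]
    exact Set.iUnion₂_mono fun i _ => Metric.closedBall_subset_ball hm
  · rw [Set.compl_iInter]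
    calc p n (⋃ m, (U m (k m))ᶜ) ≤ ∑' m, p n (U m (k m))ᶜ := measure_iUnion_le _
      _ ≤ ∑' m, (δ m : ℝ≥0∞) := ENNReal.tsum_le_tsum fun m => by
        have := hk m n
        rwa [measureReal_def, ← ENNReal.coe_toReal, ENNReal.toReal_le_toReal (by finiteness)
          (by finiteness)] at this
      _ = c := (ENNReal.hasSum_coe.2 hδc).tsum_eq
      _ ≤ ε := by exact_mod_cast hcε.le

/-- The positive parts of a weakly Cauchy sequence of signed measures have bounded mass. -/
lemma exists_forall_measure_univ_le {Ω : Type*} [TopologicalSpace Ω]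
    [TopologicalSpace.PseudoMetrizableSpace Ω] [MeasurableSpace Ω] [BorelSpace Ω]
    {p q : ℕ → Measure Ω} [∀ n, IsFiniteMeasure (p n)] [∀ n, IsFiniteMeasure (q n)]
    (hpq : ∀ n, p n ⟂ₘ q n)
    (hcauchy : ∀ f : Ω →ᵇ ℝ, CauchySeq fun n => ∫ x, f x ∂p n - ∫ x, f x ∂q n) :
    ∃ C : ℝ≥0, ∀ n, p n Set.univ ≤ C := by
  let T (n : ℕ) : (Ω →ᵇ ℝ) →L[ℝ] ℝ := LinearMap.mkContinuous
    { toFun := fun f => ∫ x, f x ∂p n - ∫ x, f x ∂q n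
      map_add' := fun f g => by
        simp only [BoundedContinuousFunction.coe_add, Pi.add_apply]
        rw [integral_add (f.integrable _) (g.integrable _),
          integral_add (f.integrable _) (g.integrable _)]
        ring
      map_smul' := fun c f => by
        simp only [BoundedContinuousFunction.coe_smul, smul_eq_mul, integral_const_mul,
          RingHom.id_apply]
        ring }
    ((p n).real Set.univ + (q n).real Set.univ) fun f => by
      rw [add_mul]
      exact (norm_sub_le _ _).trans
        (add_le_add (f.norm_integral_le_mul_norm _) (f.norm_integral_le_mul_norm _))
  obtain ⟨C, hC⟩ := banach_steinhaus (g := T) fun f => by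
    obtain ⟨C, hC⟩ := (hcauchy f).isBounded_range.exists_norm_le
    exact ⟨C, fun n => hC _ ⟨n, rfl⟩⟩
  refine ⟨C.toNNReal, fun n => ?_⟩
  have h : (p n).real Set.univ ≤ C := by
    refine measureReal_le_of_forall_integral_sub_le (hpq n) isOpen_univ fun g hg _ => ?_
    have hg1 : ‖g‖ ≤ 1 := (g.norm_le zero_le_one).2 fun x =>
      abs_le.2 ⟨by linarith [(hg x).1], (hg x).2⟩
    calc T n g ≤ ‖T n g‖ := le_abs_self _
      _ ≤ ‖T n‖ * ‖g‖ := (T n).le_opNorm g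
      _ ≤ ‖T n‖ := mul_le_of_le_one_right (T n).opNorm_nonneg hg1
      _ ≤ C := hC n
  exact (ENNReal.le_ofReal_iff_toReal_le (by finiteness)
    (measureReal_nonneg.trans h)).2 h

/-- The positive parts of a weakly Cauchy sequence of signed measures on a Polish space converge
weakly along any ultrafilter. -/
lemma exists_tendsto_finiteMeasure_of_cauchySeq {Ω : Type*} [TopologicalSpace Ω] [PolishSpace Ω]
    [MeasurableSpace Ω] [BorelSpace Ω]
    {p q : ℕ → Measure Ω} [∀ n, IsFiniteMeasure (p n)] [∀ n, IsFiniteMeasure (q n)]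
    (hpq : ∀ n, p n ⟂ₘ q n)
    (hcauchy : ∀ f : Ω →ᵇ ℝ, CauchySeq fun n => ∫ x, f x ∂p n - ∫ x, f x ∂q n)
    (l : Ultrafilter ℕ) :
    ∃ ρ : FiniteMeasure Ω, ∀ f : Ω →ᵇ ℝ,
      Tendsto (fun n => ∫ x, f x ∂p n) l (𝓝 (∫ x, f x ∂(ρ : Measure Ω))) := by
  obtain ⟨C, hC⟩ := exists_forall_measure_univ_le hpq hcauchy
  obtain ⟨u, -, hu_pos, hu⟩ := exists_seq_strictAnti_tendsto (0 : ℝ≥0)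
  choose K hK hpK using fun m => exists_isCompact_forall_measure_compl_le hpq hcauchy (hu_pos m)
  let P (n : ℕ) : FiniteMeasure Ω := ⟨p n, inferInstance⟩
  have hP (n : ℕ) : P n ∈ {μ : FiniteMeasure Ω | μ.mass ≤ C ∧ ∀ m, μ (K m)ᶜ ≤ u m} := by
    refine ⟨?_, fun m => ?_⟩
    · rw [← ENNReal.coe_le_coe, FiniteMeasure.ennreal_mass]
      exact hC n
    · rw [← ENNReal.coe_le_coe, FiniteMeasure.ennreal_coeFn_eq_coeFn_toMeasure]
      exact hpK m n
  let _ := TopologicalSpace.upgradeIsCompletelyMetrizable Ω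
  obtain ⟨ρ, -, hρ⟩ := (isCompact_setOfPred_finiteMeasure_mass_le_compl_isCompact_le C hu hK
    (.inl inferInstance)).ultrafilter_le_nhds (l.map P)
    (le_principal_iff.2 (Filter.mem_map.2 (Eventually.of_forall hP)))
  have hPρ : Tendsto P l (𝓝 ρ) := hρ
  exact ⟨ρ, FiniteMeasure.tendsto_iff_forall_integral_tendsto.1 hPρ⟩

/-- The integral against a difference of finite measures. -/
lemma signedIntegral_toSignedMeasure_sub {Ω : Type*} [TopologicalSpace Ω] [MeasurableSpace Ω]
    [OpensMeasurableSpace Ω] (p q : Measure Ω) [IsFiniteMeasure p] [IsFiniteMeasure q]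
    (f : Ω →ᵇ ℝ) :
    signedIntegral (p.toSignedMeasure - q.toSignedMeasure) f = ∫ x, f x ∂p - ∫ x, f x ∂q := by
  set j := (p.toSignedMeasure - q.toSignedMeasure).toJordanDecomposition with hj
  have h : j.posPart.toSignedMeasure - j.negPart.toSignedMeasure =
      p.toSignedMeasure - q.toSignedMeasure :=
    SignedMeasure.toSignedMeasure_toJordanDecomposition _
  have h' : j.posPart + q = p + j.negPart := by
    rw [← Measure.toSignedMeasure_eq_toSignedMeasure_iff, Measure.toSignedMeasure_add,
      Measure.toSignedMeasure_add]
    rwa [sub_eq_sub_iff_add_eq_add] at h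
  have hint := congrArg (fun ρ : Measure Ω => ∫ x, f x ∂ρ) h'
  simp only [integral_add_measure (f.integrable _) (f.integrable _)] at hint
  simp only [signedIntegral, ← hj]
  linarith

/-- Alexandroff: On a Polish space, every sequence of finite signed Borel
measures that is weakly Cauchy (against every bounded continuous function) converges
weakly to a finite signed Borel measure. -/
theorem stmt8 (Ω : Type*) [TopologicalSpace Ω] [PolishSpace Ω]
    [MeasurableSpace Ω] [BorelSpace Ω]
    (μ : ℕ → MeasureTheory.SignedMeasure Ω)
    (hcauchy : ∀ f : BoundedContinuousFunction Ω ℝ,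
      CauchySeq (fun n => signedIntegral (μ n) f)) :
    ∃ ν : MeasureTheory.SignedMeasure Ω, ∀ f : BoundedContinuousFunction Ω ℝ,
      Filter.Tendsto (fun n => signedIntegral (μ n) f) Filter.atTop
        (nhds (signedIntegral ν f)) := by
  have hsing (n : ℕ) := (μ n).toJordanDecomposition.mutuallySingular
  obtain ⟨p, hp⟩ := exists_tendsto_finiteMeasure_of_cauchySeq hsing hcauchy (hyperfilter ℕ)
  obtain ⟨q, hq⟩ := exists_tendsto_finiteMeasure_of_cauchySeq (fun n => (hsing n).symm)
    (fun f => by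
      convert (hcauchy f).neg using 2 with n
      exact (neg_sub _ _).symm) (hyperfilter ℕ)
  refine ⟨(p : Measure Ω).toSignedMeasure - (q : Measure Ω).toSignedMeasure, fun f => ?_⟩
  rw [signedIntegral_toSignedMeasure_sub]
  obtain ⟨a, ha⟩ := cauchySeq_tendsto_of_complete (hcauchy f)
  rwa [tendsto_nhds_unique ((hp f).sub (hq f)) (ha.mono_left Nat.hyperfilter_le_atTop)]
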